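/- Let H be a compact metrizable space, let n ≥ 1, and let v_1, …, v_{n+1} be n+1 distinct points of H. Let (X_1,d_1,a_1), …, (X_{n+1},d_{n+1},a_{n+1}) be pointed proper CAT(0) metric spaces with d_pGH((X_i,d_i,a_i),(X_j,d_j,a_j)) > 0 for all distinct i, j. Then there exists a topological embedding Φ : H → 𝒫𝒵 (into the space of pointed proper metric spaces with the pointed Gromov–Hausdorff distance) such that Φ(v_i) = (X_i,d_i,a_i) for every i = 1, …, n+1. -/

import Mathlib

/-- A metric space is *geodesic* if any two points `x, y` are joined by a
geodesic, i.e. a map `γ : [0,1] → X` with `γ 0 = x`, `γ 1 = y` and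
`dist (γ s) (γ t) = |s - t| * dist x y`. -/
def IsGeodesicSpace (X : Type*) [MetricSpace X] : Prop :=
  ∀ x y : X, ∃ γ : ℝ → X, γ 0 = x ∧ γ 1 = y ∧
    ∀ s ∈ Set.Icc (0 : ℝ) 1, ∀ t ∈ Set.Icc (0 : ℝ) 1,
      dist (γ s) (γ t) = |s - t| * dist x y

/-- A metric space is *CAT(0)* if it is geodesic and every geodesic triangle
satisfies the Euclidean comparison inequality; equivalently (the formulation
used here), the comparison (CN) inequality holds along every geodesic. -/
def IsCAT0Space (X : Type*) [MetricSpace X] : Prop :=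
  IsGeodesicSpace X ∧
  ∀ x y z : X, ∀ γ : ℝ → X, γ 0 = x → γ 1 = y →
    (∀ s ∈ Set.Icc (0 : ℝ) 1, ∀ t ∈ Set.Icc (0 : ℝ) 1,
      dist (γ s) (γ t) = |s - t| * dist x y) →
    ∀ t ∈ Set.Icc (0 : ℝ) 1,
      dist z (γ t) ^ 2 ≤
        (1 - t) * dist z x ^ 2 + t * dist z y ^ 2 - t * (1 - t) * dist x y ^ 2

/-- `IsAdmissiblePair a b t h` says that `h` is a `(t; a, b)`-admissible metric
on the disjoint union `X ⊕ Y`: it is a metric restricting to the given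
distances on `X²` and `Y²`, with `h(a,b) < t`, and the closed ball of radius
`t⁻¹` around `a` (resp. `b`) is contained in the open `t`-neighbourhood of `Y`
(resp. `X`). -/
def IsAdmissiblePair {X Y : Type*} [MetricSpace X] [MetricSpace Y]
    (a : X) (b : Y) (t : ℝ) (h : X ⊕ Y → X ⊕ Y → ℝ) : Prop :=
  (∀ p q, h p q = 0 ↔ p = q) ∧
  (∀ p q, h p q = h q p) ∧
  (∀ p q r, h p r ≤ h p q + h q r) ∧
  (∀ x y : X, h (Sum.inl x) (Sum.inl y) = dist x y) ∧
  (∀ x y : Y, h (Sum.inr x) (Sum.inr y) = dist x y) ∧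
  h (Sum.inl a) (Sum.inr b) < t ∧
  (∀ p, h (Sum.inl a) p ≤ t⁻¹ → ∃ y : Y, h p (Sum.inr y) < t) ∧
  (∀ p, h (Sum.inr b) p ≤ t⁻¹ → ∃ x : X, h p (Sum.inl x) < t)

/-- The pointed Gromov–Hausdorff distance
`d_pGH = min { d'_pGH, 1/2 }`, where `d'_pGH` is the infimum of all `t > 0`
for which a `(t; a, b)`-admissible metric on `X ⊕ Y` exists.  (Taking `sInf`
of the set together with `1/2` implements the truncation at `1/2`.) -/
noncomputable def pghDistOf (X Y : Type*) [MetricSpace X] [MetricSpace Y]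
    (a : X) (b : Y) : ℝ :=
  sInf (insert (1 / 2 : ℝ)
    {t : ℝ | 0 < t ∧ ∃ h : X ⊕ Y → X ⊕ Y → ℝ, IsAdmissiblePair a b t h})

/-- A pointed proper metric space: a (proper) metric space together with a
base point. -/
structure PointedProperMetricSpace : Type 1 where
  carrier : Type
  [met : MetricSpace carrier]
  [prop : ProperSpace carrier]
  pt : carrier

attribute [instance] PointedProperMetricSpace.met PointedProperMetricSpace.prop

/-- The pointed Gromov–Hausdorff distance between pointed proper metric
spaces. -/
noncomputable def pghDist (p q : PointedProperMetricSpace) : ℝ :=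
  pghDistOf p.carrier q.carrier p.pt q.pt

/-- The topology induced by the pointed Gromov–Hausdorff distance (generated
by its open balls). -/
instance : TopologicalSpace PointedProperMetricSpace :=
  TopologicalSpace.generateFrom
    {s | ∃ (p : PointedProperMetricSpace) (ε : ℝ), 0 < ε ∧
      s = {q | pghDist p q < ε}}

/-- Two pointed metric spaces are identified in `𝒫ℳ` when there is a
base-point-preserving isometric bijection between them. -/
instance pointedIsometrySetoid : Setoid PointedProperMetricSpace where
  r p q := ∃ e : p.carrier ≃ᵢ q.carrier, e p.pt = q.pt
  iseqv := by
    refine ⟨fun p => ⟨IsometryEquiv.refl _, rfl⟩, ?_, ?_⟩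
    · rintro p q ⟨e, he⟩
      exact ⟨e.symm, by rw [← he, IsometryEquiv.symm_apply_apply]⟩
    · rintro p q r ⟨e, he⟩ ⟨f, hf⟩
      exact ⟨e.trans f, by rw [IsometryEquiv.trans_apply, he, hf]⟩

/-- `𝒫ℳ`: the space of pointed isometry classes of pointed proper metric
spaces, with the (quotient of the) pointed Gromov–Hausdorff topology. -/
def PGHSpace : Type 1 := Quotient pointedIsometrySetoid

instance : TopologicalSpace PGHSpace :=
  instTopologicalSpaceQuotient

/-- The pointed isometry class of a pointed proper metric space. -/
def PGHSpace.mk (X : Type) [MetricSpace X] [ProperSpace X] (a : X) : PGHSpace :=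
  Quotient.mk pointedIsometrySetoid ⟨X, a⟩

/-- `𝒫𝒵`: the subset of `𝒫ℳ` consisting of pointed proper CAT(0)
spaces. -/
def PGHCat0 : Set PGHSpace :=
  {x | IsCAT0Space (Quotient.out (α := PointedProperMetricSpace) x).carrier}

/-! ### Basics on the pointed Gromov-Hausdorff distance -/

/-- Cross distances between two pointed metric spaces witnessing closeness. -/
structure CrossGood {X Y : Type*} [MetricSpace X] [MetricSpace Y] (a : X) (b : Y) (s : ℝ)
    (c : X → Y → ℝ) : Prop where
  nonneg : ∀ x y, 0 ≤ c x y
  tri1 : ∀ x x' y, c x y ≤ dist x x' + c x' y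
  tri2 : ∀ x y y', c x y ≤ c x y' + dist y' y
  tri3 : ∀ x x' y, dist x x' ≤ c x y + c x' y
  tri4 : ∀ x y y', dist y y' ≤ c x y + c x y'
  base : c a b < s
  left : ∀ x, dist a x ≤ s⁻¹ → ∃ y, c x y < s
  right : ∀ y, dist b y ≤ s⁻¹ → ∃ x, c x y < s

/-- The glued metric. -/
def glueFun {X Y : Type*} [MetricSpace X] [MetricSpace Y] (c : X → Y → ℝ) (δ : ℝ) :
    X ⊕ Y → X ⊕ Y → ℝ
  | Sum.inl x, Sum.inl x' => dist x x'
  | Sum.inr y, Sum.inr y' => dist y y'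
  | Sum.inl x, Sum.inr y => c x y + δ
  | Sum.inr y, Sum.inl x => c x y + δ

theorem pghDistOf_bddBelow {X Y : Type*} [MetricSpace X] [MetricSpace Y] (a : X) (b : Y) :
    BddBelow (insert (1 / 2 : ℝ)
      {t : ℝ | 0 < t ∧ ∃ h : X ⊕ Y → X ⊕ Y → ℝ, IsAdmissiblePair a b t h}) := by
  refine ⟨0, ?_⟩
  rintro t (rfl | ⟨h, -⟩)
  · norm_num
  · exact h.le

theorem pghDistOf_nonneg {X Y : Type*} [MetricSpace X] [MetricSpace Y] (a : X) (b : Y) :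
    0 ≤ pghDistOf X Y a b := by
  apply Real.sInf_nonneg
  rintro t (rfl | ⟨h, -⟩)
  · norm_num
  · exact h.le

theorem pghDistOf_le_half {X Y : Type*} [MetricSpace X] [MetricSpace Y] (a : X) (b : Y) :
    pghDistOf X Y a b ≤ 1 / 2 :=
  csInf_le (pghDistOf_bddBelow a b) (Set.mem_insert _ _)

theorem CrossGood.pos {X Y : Type*} [MetricSpace X] [MetricSpace Y] {a : X} {b : Y} {s : ℝ}
    {c : X → Y → ℝ} (h : CrossGood a b s c) : 0 < s :=
  lt_of_le_of_lt (h.nonneg a b) h.base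

theorem CrossGood.pgh_le {X Y : Type*} [MetricSpace X] [MetricSpace Y] {a : X} {b : Y} {s : ℝ}
    {c : X → Y → ℝ} (h : CrossGood a b s c) : pghDistOf X Y a b ≤ s := by
  refine le_of_forall_gt_imp_ge_of_dense ?_
  intro t ht
  have hs := h.pos
  have ht0 : 0 < t := hs.trans ht
  have hinv : t⁻¹ ≤ s⁻¹ := inv_anti₀ hs ht.le
  apply csInf_le (pghDistOf_bddBelow a b)
  right
  have hδ : 0 < t - s := sub_pos.2 ht
  refine ⟨ht0, glueFun c (t - s), ?_, ?_, ?_, ?_, ?_, ?_, ?_, ?_⟩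
  · rintro (x | y) (x' | y')
    · simp [glueFun]
    · have := h.nonneg x y'
      simp only [glueFun, reduceCtorEq, iff_false]
      linarith
    · have := h.nonneg x' y
      simp only [glueFun, reduceCtorEq, iff_false]
      linarith
    · simp [glueFun]
  · rintro (x | y) (x' | y') <;> simp [glueFun, dist_comm]
  · rintro (x | y) (x' | y') (x'' | y'') <;> simp only [glueFun]
    · exact dist_triangle _ _ _
    · linarith [h.tri1 x x' y'']
    · linarith [h.tri3 x x'' y']
    · linarith [h.tri2 x y'' y']
    · linarith [h.tri1 x'' x' y, dist_comm x'' x']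
    · linarith [h.tri4 x' y y'']
    · linarith [h.tri2 x'' y y', dist_comm y y']
    · exact dist_triangle _ _ _
  · intros; rfl
  · intros; rfl
  · simp only [glueFun]; linarith [h.base]
  · rintro (x | y) hp
    · obtain ⟨y, hy⟩ := h.left x (le_trans hp hinv)
      exact ⟨y, by simp only [glueFun]; linarith⟩
    · exact ⟨y, by simpa [glueFun] using ht0⟩
  · rintro (x | y) hp
    · exact ⟨x, by simpa [glueFun] using ht0⟩
    · obtain ⟨x, hx⟩ := h.right y (le_trans hp hinv)
      exact ⟨x, by simp only [glueFun]; linarith⟩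

theorem exists_crossGood {X Y : Type*} [MetricSpace X] [MetricSpace Y] {a : X} {b : Y} {t : ℝ}
    (ht : pghDistOf X Y a b < t) (ht2 : t ≤ 1 / 2) :
    ∃ s, s < t ∧ ∃ c, CrossGood a b s c := by
  obtain ⟨s, hs, hst⟩ := exists_lt_of_csInf_lt (Set.insert_nonempty _ _) ht
  rcases hs with rfl | ⟨hs0, h, h0, hsymm, htri, hX, hY, hab, hl, hr⟩
  · linarith
  refine ⟨s, hst, fun x y => h (Sum.inl x) (Sum.inr y), ?_, ?_, ?_, ?_, ?_, hab, ?_, ?_⟩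
  · intro x y
    have h1 := htri (Sum.inl x) (Sum.inr y) (Sum.inl x)
    rw [hsymm (Sum.inr y), (h0 _ _).2 rfl] at h1
    linarith
  · intro x x' y
    rw [← hX]; exact htri _ _ _
  · intro x y y'
    rw [← hY]; exact htri _ _ _
  · intro x x' y
    rw [← hX, hsymm (Sum.inl x') (Sum.inr y)]; exact htri _ _ _
  · intro x y y'
    rw [← hY, hsymm (Sum.inl x) (Sum.inr y)]; exact htri _ _ _
  · intro x hx
    exact hl _ (by rwa [hX])
  · intro y hy
    obtain ⟨x, hx⟩ := hr (Sum.inr y) (by rwa [hY])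
    exact ⟨x, by rwa [hsymm]⟩

theorem CrossGood.swap {X Y : Type*} [MetricSpace X] [MetricSpace Y] {a : X} {b : Y} {s : ℝ}
    {c : X → Y → ℝ} (h : CrossGood a b s c) : CrossGood b a s (fun y x => c x y) where
  nonneg y x := h.nonneg x y
  tri1 y y' x := by linarith [h.tri2 x y y', dist_comm y y']
  tri2 y x x' := by linarith [h.tri1 x x' y, dist_comm x x']
  tri3 y y' x := h.tri4 x y y'
  tri4 y x x' := h.tri3 x x' y
  base := h.base
  left := h.right
  right := h.left

theorem pghDistOf_symm_le {X Y : Type*} [MetricSpace X] [MetricSpace Y] (a : X) (b : Y) :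
    pghDistOf Y X b a ≤ pghDistOf X Y a b := by
  refine le_of_forall_gt_imp_ge_of_dense ?_
  intro t ht
  by_cases ht2 : t ≤ 1 / 2
  · obtain ⟨s, hs, c, hc⟩ := exists_crossGood ht ht2
    exact hc.swap.pgh_le.trans hs.le
  · exact (pghDistOf_le_half _ _).trans (le_of_not_ge ht2)

theorem pghDistOf_symm {X Y : Type*} [MetricSpace X] [MetricSpace Y] (a : X) (b : Y) :
    pghDistOf Y X b a = pghDistOf X Y a b :=
  le_antisymm (pghDistOf_symm_le a b) (pghDistOf_symm_le b a)

theorem inv_aux {s t : ℝ} (hs : 0 < s) (ht : 0 < t) (hst : s + t ≤ 1 / 2) :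
    2 * s + (s + t)⁻¹ ≤ t⁻¹ := by
  have h1 : t⁻¹ - (s + t)⁻¹ = s / (t * (s + t)) := by field_simp; ring
  have h2 : 2 * s ≤ s / (t * (s + t)) := by
    rw [le_div_iff₀ (by positivity)]
    have : t * (s + t) ≤ 1 / 2 * (1 / 2) := by
      apply mul_le_mul <;> linarith
    nlinarith
  linarith

theorem CrossGood.comp {X Y Z : Type*} [MetricSpace X] [MetricSpace Y] [MetricSpace Z]
    {a : X} {b : Y} {e : Z} {s t : ℝ} {c : X → Y → ℝ} {c' : Y → Z → ℝ}
    (h : CrossGood a b s c) (h' : CrossGood b e t c') (hst : s + t ≤ 1 / 2) :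
    CrossGood a e (s + t) (fun x z => ⨅ y, (c x y + c' y z)) := by
  have hs := h.pos
  have ht := h'.pos
  have : Nonempty Y := ⟨b⟩
  have hb : ∀ x z, BddBelow (Set.range fun y => c x y + c' y z) := by
    intro x z
    refine ⟨0, ?_⟩
    rintro _ ⟨y, rfl⟩
    exact add_nonneg (h.nonneg _ _) (h'.nonneg _ _)
  have hle : ∀ x y z, ⨅ y, (c x y + c' y z) ≤ c x y + c' y z := fun x y z => ciInf_le (hb x z) y
  have i1 : (s + t)⁻¹ ≤ s⁻¹ := inv_anti₀ hs (by linarith)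
  have i2 : (s + t)⁻¹ ≤ t⁻¹ := inv_anti₀ ht (by linarith)
  refine ⟨?_, ?_, ?_, ?_, ?_, ?_, ?_, ?_⟩
  · intro x z
    exact Real.iInf_nonneg fun y => add_nonneg (h.nonneg _ _) (h'.nonneg _ _)
  · intro x x' z
    rw [← sub_le_iff_le_add']
    refine le_ciInf fun y => ?_
    linarith [hle x y z, h.tri1 x x' y]
  · intro x z z'
    rw [← sub_le_iff_le_add]
    refine le_ciInf fun y => ?_
    linarith [hle x y z, h'.tri2 y z z']
  · intro x x' z
    rw [← sub_le_iff_le_add]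
    refine le_ciInf fun y => ?_
    rw [sub_le_comm]
    refine le_ciInf fun y' => ?_
    linarith [h.tri3 x x' y, h'.tri3 y y' z, h.tri2 x' y y', dist_comm y y']
  · intro x z z'
    rw [← sub_le_iff_le_add]
    refine le_ciInf fun y => ?_
    rw [sub_le_comm]
    refine le_ciInf fun y' => ?_
    linarith [h'.tri4 y z z', h.tri4 x y y', h'.tri1 y y' z']
  · show (⨅ y, (c a y + c' y e)) < s + t
    linarith [hle a b e, h.base, h'.base]
  · intro x hx
    obtain ⟨y, hy⟩ := h.left x (hx.trans i1)
    have : dist b y ≤ t⁻¹ := by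
      linarith [inv_aux hs ht hst, h.tri4 x b y, h.tri1 x a b, dist_comm a x, h.base]
    obtain ⟨z, hz⟩ := h'.left y this
    exact ⟨z, by linarith [hle x y z]⟩
  · intro z hz
    obtain ⟨y, hy⟩ := h'.right z (hz.trans i2)
    have : dist b y ≤ s⁻¹ := by
      have := inv_aux ht hs (by linarith)
      rw [add_comm t s] at this
      linarith [h'.tri3 b y z, h'.tri2 b z e, h'.base]
    obtain ⟨x, hx⟩ := h.right y this
    exact ⟨x, by linarith [hle x y z]⟩

theorem pghDistOf_triangle {X Y Z : Type*} [MetricSpace X] [MetricSpace Y] [MetricSpace Z]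
    (a : X) (b : Y) (e : Z) :
    pghDistOf X Z a e ≤ pghDistOf X Y a b + pghDistOf Y Z b e := by
  by_contra! hcon
  have h2 := pghDistOf_le_half a e
  set u := pghDistOf X Y a b
  set v := pghDistOf Y Z b e
  have hu : 0 ≤ u := pghDistOf_nonneg _ _
  have hv : 0 ≤ v := pghDistOf_nonneg _ _
  set r := pghDistOf X Z a e
  obtain ⟨s, hs, c, hc⟩ := exists_crossGood (t := u + (r - u - v) / 2) (a := a) (b := b)
    (by show u < _; linarith) (by linarith)
  obtain ⟨s', hs', c', hc'⟩ := exists_crossGood (t := v + (r - u - v) / 2) (a := b) (b := e)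
    (by show v < _; linarith) (by linarith)
  have : r ≤ s + s' := (hc.comp hc' (by linarith)).pgh_le
  linarith

/-- Two pointed spaces isometrically embedded in a common space. -/
theorem pghDistOf_le_of_isometry {X Y M : Type*} [MetricSpace X] [MetricSpace Y] [MetricSpace M]
    {a : X} {b : Y} {f : X → M} {g : Y → M} (hf : Isometry f) (hg : Isometry g)
    (hab : f a = g b) {t : ℝ} (ht : 0 < t)
    (hl : ∀ x, dist a x ≤ t⁻¹ → ∃ y, dist (f x) (g y) < t)
    (hr : ∀ y, dist b y ≤ t⁻¹ → ∃ x, dist (f x) (g y) < t) :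
    pghDistOf X Y a b ≤ t := by
  refine CrossGood.pgh_le (c := fun x y => dist (f x) (g y)) ⟨?_, ?_, ?_, ?_, ?_, ?_, hl, hr⟩
  · intros; exact dist_nonneg
  · intro x x' y
    rw [← hf.dist_eq]; exact dist_triangle _ _ _
  · intro x y y'
    rw [← hg.dist_eq]; exact dist_triangle _ _ _
  · intro x x' y
    rw [← hf.dist_eq]; exact dist_triangle_right _ _ _
  · intro x y y'
    rw [← hg.dist_eq]; exact dist_triangle_left _ _ _
  · show dist (f a) (g b) < t
    rw [hab, dist_self]; exact ht

theorem pghDist_eq_zero_of_equiv {p q : PointedProperMetricSpace}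
    (h : ∃ e : p.carrier ≃ᵢ q.carrier, e p.pt = q.pt) : pghDist p q = 0 := by
  obtain ⟨e, he⟩ := h
  refine le_antisymm ?_ (pghDistOf_nonneg _ _)
  refine le_of_forall_gt_imp_ge_of_dense fun t ht => ?_
  refine pghDistOf_le_of_isometry (M := q.carrier) e.isometry isometry_id he ht ?_ ?_
  · intro x _
    exact ⟨e x, by simpa using ht⟩
  · intro y _
    exact ⟨e.symm y, by simpa using ht⟩

theorem pghDist_self (p : PointedProperMetricSpace) : pghDist p p = 0 :=
  pghDist_eq_zero_of_equiv ⟨IsometryEquiv.refl _, rfl⟩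

theorem pghDist_comm (p q : PointedProperMetricSpace) : pghDist p q = pghDist q p :=
  pghDistOf_symm _ _

theorem pghDist_triangle (p q r : PointedProperMetricSpace) :
    pghDist p r ≤ pghDist p q + pghDist q r :=
  pghDistOf_triangle _ _ _

theorem continuous_pghDist (p : PointedProperMetricSpace) : Continuous (pghDist p) := by
  rw [continuous_iff_continuousAt]
  intro q
  rw [ContinuousAt, Metric.tendsto_nhds]
  intro ε hε
  have hopen : IsOpen {r | pghDist q r < ε} :=
    TopologicalSpace.isOpen_generateFrom_of_mem ⟨q, ε, hε, rfl⟩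
  have hmem : q ∈ {r | pghDist q r < ε} := by
    show pghDist q q < ε
    rw [pghDist_self]; exact hε
  filter_upwards [hopen.mem_nhds hmem] with r hr
  rw [Real.dist_eq, abs_lt]
  have h1 := pghDist_triangle p q r
  have h2 := pghDist_triangle p r q
  rw [pghDist_comm r q] at h2
  have hr' : pghDist q r < ε := hr
  constructor <;> linarith

theorem continuous_to_pointed {H : Type*} [TopologicalSpace H] (Y : H → PointedProperMetricSpace)
    (hY : ∀ h₀, ∀ ε > 0, ∀ᶠ h in nhds h₀, pghDist (Y h₀) (Y h) < ε) : Continuous Y := by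
  refine continuous_generateFrom_iff.2 ?_
  rintro _ ⟨p, ε, hε, rfl⟩
  rw [isOpen_iff_mem_nhds]
  intro h₀ hh
  have hh' : pghDist p (Y h₀) < ε := hh
  filter_upwards [hY h₀ (ε - pghDist p (Y h₀)) (by linarith)] with h hh2
  show pghDist p (Y h) < ε
  linarith [pghDist_triangle p (Y h₀) (Y h)]

theorem isEmbedding_of_family {H : Type*} [TopologicalSpace H] [CompactSpace H]
    (Y : H → PointedProperMetricSpace)
    (hY : ∀ h₀, ∀ ε > 0, ∀ᶠ h in nhds h₀, pghDist (Y h₀) (Y h) < ε)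
    (hpos : ∀ h h', h ≠ h' → 0 < pghDist (Y h) (Y h')) :
    Topology.IsEmbedding (fun h => (Quotient.mk pointedIsometrySetoid (Y h) : PGHSpace)) := by
  have hc : Continuous (fun h => (Quotient.mk pointedIsometrySetoid (Y h) : PGHSpace)) :=
    Continuous.comp (continuous_quotient_mk' (s := pointedIsometrySetoid))
      (continuous_to_pointed Y hY)
  have hinv : ∀ p q r : PointedProperMetricSpace, q ≈ r → pghDist p q = pghDist p r := by
    intro p q r h
    have h0 := pghDist_eq_zero_of_equiv h
    have h1 := pghDist_triangle p q r
    have h2 := pghDist_triangle p r q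
    rw [pghDist_comm r q] at h2
    linarith
  let Ψ : PGHSpace → H → ℝ := fun q h => Quotient.lift (pghDist (Y h)) (hinv (Y h)) q
  have hΨ : Continuous Ψ := by
    refine continuous_pi fun h => ?_
    exact (continuous_pghDist (Y h)).quotient_lift (hinv (Y h))
  refine Topology.IsEmbedding.of_comp hc hΨ ?_
  refine (Continuous.isClosedEmbedding (hΨ.comp hc) ?_).isEmbedding
  intro h h' heq
  by_contra hne
  have h1 : pghDist (Y h) (Y h) = pghDist (Y h) (Y h') := congrFun heq h
  rw [pghDist_self] at h1
  exact absurd h1 (hpos h h' hne).ne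

/-! ### CAT(0) spaces and the ambient space -/

theorem le_of_sq_le_aux {a b : ℝ} (h : a ^ 2 ≤ b ^ 2) (hb : 0 ≤ b) : a ≤ b := by
  by_contra! hcon
  nlinarith

/-- A convex subset with a strong form of the CAT(0) inequality along chosen geodesics. -/
def CvxCat {M : Type*} [MetricSpace M] (S : Set M) : Prop :=
  ∀ x ∈ S, ∀ y ∈ S, ∃ γ : ℝ → M, γ 0 = x ∧ γ 1 = y ∧ (∀ t ∈ Set.Icc (0 : ℝ) 1, γ t ∈ S) ∧
    (∀ s ∈ Set.Icc (0 : ℝ) 1, ∀ t ∈ Set.Icc (0 : ℝ) 1,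
      dist (γ s) (γ t) = |s - t| * dist x y) ∧
    ∀ z, ∀ t ∈ Set.Icc (0 : ℝ) 1, dist z (γ t) ^ 2 ≤
        (1 - t) * dist z x ^ 2 + t * dist z y ^ 2 - t * (1 - t) * dist x y ^ 2

theorem CvxCat.isCAT0Space {M : Type*} [MetricSpace M] {S : Set M} (hS : CvxCat S) :
    IsCAT0Space S := by
  constructor
  · intro x y
    obtain ⟨γ, h0, h1, hm, hg, -⟩ := hS x x.2 y y.2
    refine ⟨fun t => ⟨γ (Set.projIcc 0 1 zero_le_one t), hm _ (Set.projIcc 0 1 zero_le_one t).2⟩,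
      ?_, ?_, ?_⟩
    · apply Subtype.ext
      simp [h0]
    · apply Subtype.ext
      simp [h1]
    · intro s hs t ht
      beta_reduce
      rw [Set.projIcc_of_mem _ hs, Set.projIcc_of_mem _ ht]
      exact hg s hs t ht
  · intro x y z γ' h0' h1' hg' t ht
    obtain ⟨γ, h0, h1, hm, hg, hcn⟩ := hS x x.2 y y.2
    have e : (γ' t : M) = γ t := by
      have h := hcn (γ' t) t ht
      have e1 : dist (γ' t : M) x = t * dist x y := by
        have := hg' t ht 0 (by simp)
        rw [h0'] at this
        rw [sub_zero, abs_of_nonneg ht.1] at this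
        exact this
      have e2 : dist (γ' t : M) y = (1 - t) * dist x y := by
        have := hg' t ht 1 (by simp)
        rw [h1', abs_sub_comm, abs_of_nonneg (by linarith [ht.2])] at this
        exact this
      rw [e1, e2] at h
      have h3 : dist (γ' t : M) (γ t) ^ 2 ≤ 0 := by
        refine h.trans (le_of_eq ?_)
        rw [Subtype.dist_eq]
        ring
      have h4 : dist (γ' t : M) (γ t) = 0 := by
        have := sq_nonneg (dist (γ' t : M) (γ t))
        exact pow_eq_zero_iff (two_ne_zero) |>.1 (le_antisymm h3 this)
      exact dist_eq_zero.1 h4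
    have := hcn z t ht
    rw [← e] at this
    exact this

theorem IsCAT0Space.of_isometryEquiv {M N : Type*} [MetricSpace M] [MetricSpace N]
    (e : M ≃ᵢ N) (h : IsCAT0Space M) : IsCAT0Space N := by
  obtain ⟨hg, hc⟩ := h
  constructor
  · intro x y
    obtain ⟨γ, h0, h1, h2⟩ := hg (e.symm x) (e.symm y)
    refine ⟨fun t => e (γ t), by simp [h0], by simp [h1], ?_⟩
    intro s hs t ht
    rw [e.dist_eq, h2 s hs t ht, e.symm.dist_eq]
  · intro x y z γ h0 h1 h2 t ht
    have := hc (e.symm x) (e.symm y) (e.symm z) (fun t => e.symm (γ t)) (by simp [h0])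
      (by simp [h1]) (by intro s hs t ht; simp only [e.symm.dist_eq]; exact h2 s hs t ht) t ht
    simpa only [e.symm.dist_eq] using this

theorem hilbert_cn {V : Type*} [NormedAddCommGroup V] [InnerProductSpace ℝ V] (x y z : V) (t : ℝ) :
    dist z (x + t • (y - x)) ^ 2 =
      (1 - t) * dist z x ^ 2 + t * dist z y ^ 2 - t * (1 - t) * dist x y ^ 2 := by
  have h1 : z - (x + t • (y - x)) = (1 - t) • (z - x) + t • (z - y) := by module
  have h2 : x - y = (z - y) - (z - x) := by abel
  rw [dist_eq_norm, dist_eq_norm, dist_eq_norm, dist_eq_norm, h1, h2,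
    @norm_add_sq_real, @norm_sub_sq_real _ _ _ (z - y) (z - x), norm_smul, norm_smul, inner_smul_left, inner_smul_right,
    mul_pow, mul_pow, Real.norm_eq_abs, Real.norm_eq_abs, sq_abs, sq_abs,
    real_inner_comm (z - x) (z - y)]
  simp
  ring

/-- Finite dimensional Euclidean blocks. -/
abbrev EB (D : ℕ → ℕ) (m : ℕ) : Type := EuclideanSpace ℝ (Fin (D m))

/-- The Hilbert space direct sum of the blocks. -/
abbrev HilbL (D : ℕ → ℕ) : Type := lp (EB D) 2

/-- The ambient space. -/
abbrev BigE {ι : Type} [Fintype ι] (X : ι → Type) [∀ i, MetricSpace (X i)] (D : ℕ → ℕ) : Type :=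
  WithLp 2 (PiLp 2 X × HilbL D)

/-- The point of the ambient space with given coordinates. -/
def mkE {ι : Type} [Fintype ι] {X : ι → Type} [∀ i, MetricSpace (X i)] {D : ℕ → ℕ}
    (p : ∀ i, X i) (z : HilbL D) : BigE X D :=
  WithLp.toLp 2 (WithLp.toLp 2 p, z)

theorem mkE_fst {ι : Type} [Fintype ι] {X : ι → Type} [∀ i, MetricSpace (X i)] {D : ℕ → ℕ}
    (p : ∀ i, X i) (z : HilbL D) (i : ι) : (mkE p z).fst i = p i := rfl

theorem mkE_snd {ι : Type} [Fintype ι] {X : ι → Type} [∀ i, MetricSpace (X i)] {D : ℕ → ℕ}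
    (p : ∀ i, X i) (z : HilbL D) : (mkE p z).snd = z := rfl

theorem mkE_eta {ι : Type} [Fintype ι] {X : ι → Type} [∀ i, MetricSpace (X i)] {D : ℕ → ℕ}
    (y : BigE X D) : mkE (fun i => y.fst i) y.snd = y := rfl

theorem bigE_dist_sq {ι : Type} [Fintype ι] {X : ι → Type} [∀ i, MetricSpace (X i)] {D : ℕ → ℕ}
    (x y : BigE X D) :
    dist x y ^ 2 = ∑ i, dist (x.fst i) (y.fst i) ^ 2 + dist x.snd y.snd ^ 2 := by
  have h1 : dist x y = Real.sqrt (dist x.fst y.fst ^ 2 + dist x.snd y.snd ^ 2) := by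
    rw [WithLp.prod_dist_eq_add (by norm_num), Real.sqrt_eq_rpow]
    norm_num
  have h2 : dist x.fst y.fst = Real.sqrt (∑ i, dist (x.fst i) (y.fst i) ^ 2) := by
    rw [PiLp.dist_eq_sum (by norm_num), Real.sqrt_eq_rpow]
    norm_num
  rw [h1, Real.sq_sqrt (by positivity), h2, Real.sq_sqrt (by positivity)]

theorem hilbL_hasSum {D : ℕ → ℕ} (z w : HilbL D) :
    HasSum (fun m => ‖z m - w m‖ ^ 2) (dist z w ^ 2) := by
  have := lp.hasSum_norm (p := 2) (by norm_num) (z - w)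
  simpa [dist_eq_norm] using this

theorem hilbL_dist_sq {D : ℕ → ℕ} (z w : HilbL D) :
    dist z w ^ 2 = ∑' m, ‖z m - w m‖ ^ 2 := (hilbL_hasSum z w).tsum_eq.symm

theorem fst_dist_le {ι : Type} [Fintype ι] {X : ι → Type} [∀ i, MetricSpace (X i)] {D : ℕ → ℕ}
    (x y : BigE X D) (i : ι) : dist (x.fst i) (y.fst i) ≤ dist x y := by
  apply le_of_sq_le_aux ?_ dist_nonneg
  rw [bigE_dist_sq x y]
  have := Finset.single_le_sum (f := fun i => dist (x.fst i) (y.fst i) ^ 2)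
    (fun i _ => sq_nonneg _) (Finset.mem_univ i)
  have h2 := sq_nonneg (dist x.snd y.snd)
  linarith

theorem snd_dist_le {ι : Type} [Fintype ι] {X : ι → Type} [∀ i, MetricSpace (X i)] {D : ℕ → ℕ}
    (x y : BigE X D) : dist x.snd y.snd ≤ dist x y := by
  apply le_of_sq_le_aux ?_ dist_nonneg
  rw [bigE_dist_sq x y]
  have : 0 ≤ ∑ i, dist (x.fst i) (y.fst i) ^ 2 := Finset.sum_nonneg fun i _ => sq_nonneg _
  linarith

/-- The convex subsets used in the construction. -/
def YSet {ι : Type} [Fintype ι] {X : ι → Type} [∀ i, MetricSpace (X i)] {D : ℕ → ℕ}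
    (a : ∀ i, X i) (θ : ι → ℝ) (r : ℕ → ℝ) : Set (BigE X D) :=
  {y | (∀ i, θ i * dist (a i) (y.fst i) ≤ 1 - θ i) ∧ ∀ m, ‖y.snd m‖ ≤ r m}

theorem ySet_cvxCat {ι : Type} [Fintype ι] {X : ι → Type} [∀ i, MetricSpace (X i)] {D : ℕ → ℕ}
    (hcat : ∀ i, IsCAT0Space (X i))
    (a : ∀ i, X i) (θ : ι → ℝ) (hθ : ∀ i, 0 ≤ θ i) (r : ℕ → ℝ) :
    CvxCat (YSet (D := D) a θ r) := by
  intro x hx y hy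
  choose γ h0 h1 hg using fun i => (hcat i).1 (x.fst i) (y.fst i)
  have hcn := fun i z => (hcat i).2 (x.fst i) (y.fst i) z (γ i) (h0 i) (h1 i) (hg i)
  refine ⟨fun t => mkE (fun i => γ i t) (x.snd + t • (y.snd - x.snd)), ?_, ?_, ?_, ?_, ?_⟩
  · simp only [h0, zero_smul, add_zero]
    exact mkE_eta x
  · simp only [h1, one_smul, add_sub_cancel]
    exact mkE_eta y
  · intro t ht
    constructor
    · intro i
      rw [mkE_fst]
      have hle : dist (a i) (γ i t) ≤ max (dist (a i) (x.fst i)) (dist (a i) (y.fst i)) := by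
        apply le_of_sq_le_aux ?_ (le_max_of_le_left dist_nonneg)
        refine (hcn i (a i) t ht).trans ?_
        set A := dist (a i) (x.fst i)
        set B := dist (a i) (y.fst i)
        have hA : A ^ 2 ≤ max A B ^ 2 := pow_le_pow_left₀ dist_nonneg (le_max_left _ _) 2
        have hB : B ^ 2 ≤ max A B ^ 2 := pow_le_pow_left₀ dist_nonneg (le_max_right _ _) 2
        have e1 := mul_le_mul_of_nonneg_left hA (sub_nonneg.2 ht.2)
        have e2 := mul_le_mul_of_nonneg_left hB ht.1
        have e3 : 0 ≤ t * (1 - t) * dist (x.fst i) (y.fst i) ^ 2 :=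
          mul_nonneg (mul_nonneg ht.1 (sub_nonneg.2 ht.2)) (sq_nonneg _)
        linarith
      refine (mul_le_mul_of_nonneg_left hle (hθ i)).trans ?_
      rcases max_choice (dist (a i) (x.fst i)) (dist (a i) (y.fst i)) with h | h <;> rw [h]
      · exact hx.1 i
      · exact hy.1 i
    · intro m
      rw [mkE_snd]
      have : (x.snd + t • (y.snd - x.snd)) m = (1 - t) • x.snd m + t • y.snd m := by
        simp only [lp.coeFn_add, lp.coeFn_smul, lp.coeFn_sub, Pi.add_apply, Pi.smul_apply,
          Pi.sub_apply]
        module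
      rw [this]
      refine (norm_add_le _ _).trans ?_
      rw [norm_smul, norm_smul, Real.norm_of_nonneg ht.1, Real.norm_of_nonneg (sub_nonneg.2 ht.2)]
      have e1 := mul_le_mul_of_nonneg_left (hx.2 m) (sub_nonneg.2 ht.2)
      have e2 := mul_le_mul_of_nonneg_left (hy.2 m) ht.1
      linarith
  · intro s hs t ht
    rw [← sq_eq_sq₀ dist_nonneg (by positivity), mul_pow, bigE_dist_sq, bigE_dist_sq x y]
    simp only [mkE_fst, mkE_snd]
    have e : dist (x.snd + s • (y.snd - x.snd)) (x.snd + t • (y.snd - x.snd))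
        = |s - t| * dist x.snd y.snd := by
      have : x.snd + s • (y.snd - x.snd) - (x.snd + t • (y.snd - x.snd))
        = (s - t) • (y.snd - x.snd) := by module
      rw [dist_eq_norm, this, norm_smul, Real.norm_eq_abs, dist_comm, dist_eq_norm]
    rw [e, mul_pow, mul_add, Finset.mul_sum]
    congr 1
    refine Finset.sum_congr rfl fun i _ => ?_
    rw [hg i s hs t ht, mul_pow]
  · intro z t ht
    rw [bigE_dist_sq z, bigE_dist_sq z x, bigE_dist_sq z y, bigE_dist_sq x y]
    simp only [mkE_fst, mkE_snd]
    rw [hilbert_cn]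
    have := Finset.sum_le_sum fun i (_ : i ∈ Finset.univ) => hcn i (z.fst i) t ht
    rw [Finset.sum_sub_distrib, Finset.sum_add_distrib, ← Finset.mul_sum, ← Finset.mul_sum,
      ← Finset.mul_sum] at this
    linarith

/-- Radii of the blocks. -/
noncomputable def cc (m : ℕ) : ℝ := (1 / 4 : ℝ) ^ m

theorem cc_pos (m : ℕ) : 0 < cc m := by unfold cc; positivity

theorem cc_le_one (m : ℕ) : cc m ≤ 1 := pow_le_one₀ (by norm_num) (by norm_num)

theorem cc_sq (m : ℕ) : cc m ^ 2 = (1 / 16 : ℝ) ^ m := by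
  unfold cc
  rw [← pow_mul, mul_comm, pow_mul]
  norm_num

theorem cc_sq_summable : Summable fun m => cc m ^ 2 := by
  simp only [cc_sq]
  exact summable_geometric_of_lt_one (by norm_num) (by norm_num)

theorem memLp_of_le {D : ℕ → ℕ} (z : ∀ m, EB D m) (hz : ∀ m, ‖z m‖ ≤ cc m) : Memℓp z 2 := by
  apply memℓp_gen
  refine Summable.of_nonneg_of_le (fun m => by positivity) (fun m => ?_) cc_sq_summable
  simpa using pow_le_pow_left₀ (norm_nonneg _) (hz m) 2

/-- Element of the Hilbert space from its coordinates. -/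
def mkL {D : ℕ → ℕ} (z : ∀ m, EB D m) (hz : ∀ m, ‖z m‖ ≤ cc m) : HilbL D := ⟨z, memLp_of_le z hz⟩

theorem mkL_apply {D : ℕ → ℕ} (z : ∀ m, EB D m) (hz : ∀ m, ‖z m‖ ≤ cc m) (m : ℕ) :
    mkL z hz m = z m := rfl

theorem ySet_isClosed {ι : Type} [Fintype ι] {X : ι → Type} [∀ i, MetricSpace (X i)] {D : ℕ → ℕ}
    (a : ∀ i, X i) (θ : ι → ℝ) (r : ℕ → ℝ) : IsClosed (YSet (D := D) a θ r) := by
  have hf : ∀ i, Continuous fun y : BigE X D => y.fst i := fun i =>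
    (LipschitzWith.of_dist_le_mul (K := 1) fun x y => by simpa using fst_dist_le x y i).continuous
  have hs : Continuous fun y : BigE X D => y.snd :=
    (LipschitzWith.of_dist_le_mul (K := 1) fun x y => by simpa using snd_dist_le x y).continuous
  have hm : ∀ m, Continuous fun y : BigE X D => y.snd m := fun m =>
    (lp.lipschitzWith_one_eval 2 m).continuous.comp hs
  have : YSet (D := D) a θ r = (⋂ i, {y | θ i * dist (a i) (y.fst i) ≤ 1 - θ i}) ∩
      ⋂ m, {y | ‖y.snd m‖ ≤ r m} := by
    ext y
    simp [YSet]
  rw [this]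
  refine IsClosed.inter (isClosed_iInter fun i => ?_) (isClosed_iInter fun m => ?_)
  · exact isClosed_le (continuous_const.mul (continuous_const.dist (hf i))) continuous_const
  · exact isClosed_le (hm m).norm continuous_const

theorem big_isCompact {ι : Type} [Fintype ι] {X : ι → Type} [∀ i, MetricSpace (X i)]
    [∀ i, ProperSpace (X i)] {D : ℕ → ℕ} (a : ∀ i, X i) (R : ℝ) :
    IsCompact {y : BigE X D | (∀ i, dist (y.fst i) (a i) ≤ R) ∧ ∀ m, ‖y.snd m‖ ≤ cc m} := by
  have : ∀ i, CompactSpace (Metric.closedBall (a i) R) := fun i =>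
    isCompact_iff_compactSpace.1 (isCompact_closedBall _ _)
  have : ∀ m, CompactSpace (Metric.closedBall (0 : EB D m) (cc m)) := fun m =>
    isCompact_iff_compactSpace.1 (isCompact_closedBall _ _)
  let G : (∀ i, Metric.closedBall (a i) R) × (∀ m, Metric.closedBall (0 : EB D m) (cc m)) →
      BigE X D := fun k => mkE (fun i => (k.1 i : X i))
        (mkL (fun m => (k.2 m : EB D m)) fun m => mem_closedBall_zero_iff.1 (k.2 m).2)
  have hG : Continuous G := by
    rw [continuous_iff_continuousAt]
    intro k₀
    rw [ContinuousAt, tendsto_iff_dist_tendsto_zero]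
    have hc : Continuous fun k => dist (G k) (G k₀) ^ 2 := by
      simp only [bigE_dist_sq, hilbL_dist_sq]
      refine Continuous.add ?_ ?_
      · refine continuous_finsetSum _ fun i _ => ?_
        simp only [G, mkE_fst]
        fun_prop
      · simp only [G, mkE_snd, mkL_apply]
        refine continuous_tsum (u := fun m => 4 * cc m ^ 2) (fun m => by fun_prop)
          (cc_sq_summable.mul_left 4) ?_
        intro m k
        have h1 : ‖(k.2 m : EB D m)‖ ≤ cc m := mem_closedBall_zero_iff.1 (k.2 m).2
        have h2 : ‖(k₀.2 m : EB D m)‖ ≤ cc m := mem_closedBall_zero_iff.1 (k₀.2 m).2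
        have h3 := norm_sub_le (k.2 m : EB D m) (k₀.2 m : EB D m)
        rw [Real.norm_of_nonneg (by positivity)]
        calc _ ≤ (2 * cc m) ^ 2 := pow_le_pow_left₀ (norm_nonneg _) (by linarith) 2
          _ = _ := by ring
    have h0 := hc.tendsto k₀
    simp only [dist_self] at h0
    have h1 := h0.sqrt
    simpa [Real.sqrt_sq dist_nonneg] using h1
  have : {y : BigE X D | (∀ i, dist (y.fst i) (a i) ≤ R) ∧ ∀ m, ‖y.snd m‖ ≤ cc m} = Set.range G := by
    ext y
    constructor
    · rintro ⟨h1, h2⟩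
      exact ⟨(fun i => ⟨y.fst i, h1 i⟩, fun m => ⟨y.snd m, by simpa using h2 m⟩), rfl⟩
    · rintro ⟨k, rfl⟩
      exact ⟨fun i => (k.1 i).2, fun m => mem_closedBall_zero_iff.1 (k.2 m).2⟩
  rw [this]
  exact isCompact_range hG

theorem ySet_proper {ι : Type} [Fintype ι] {X : ι → Type} [∀ i, MetricSpace (X i)]
    [∀ i, ProperSpace (X i)] {D : ℕ → ℕ} (a : ∀ i, X i) (θ : ι → ℝ) (r : ℕ → ℝ)
    (hr : ∀ m, r m ≤ cc m) : ProperSpace (YSet (D := D) a θ r) := by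
  constructor
  intro x R
  have hcl := ySet_isClosed (D := D) a θ r
  rw [hcl.isClosedEmbedding_subtypeVal.isCompact_iff]
  refine (big_isCompact (D := D) a (R + dist x.1 (mkE a 0))).of_isClosed_subset
    (hcl.isClosedEmbedding_subtypeVal.isClosedMap _ Metric.isClosed_closedBall) ?_
  rintro _ ⟨y, hy, rfl⟩
  refine ⟨fun i => ?_, fun m => (y.2.2 m).trans (hr m)⟩
  have h1 := fst_dist_le y.1 (mkE a 0) i
  rw [mkE_fst] at h1
  have h2 := dist_triangle y.1 x.1 (mkE a 0)
  have h3 : dist y.1 x.1 ≤ R := hy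
  linarith

theorem base_mem {ι : Type} [Fintype ι] {X : ι → Type} [∀ i, MetricSpace (X i)]
    {D : ℕ → ℕ} (a : ∀ i, X i) (θ : ι → ℝ) (r : ℕ → ℝ) (hθ : ∀ i, θ i ≤ 1) (hr : ∀ m, 0 ≤ r m) :
    mkE a 0 ∈ YSet (D := D) a θ r := by
  refine ⟨fun i => ?_, fun m => ?_⟩
  · rw [mkE_fst, dist_self]; linarith [hθ i]
  · rw [mkE_snd]; simpa using hr m

theorem retract_X {M : Type*} [MetricSpace M] (hM : IsGeodesicSpace M) (a p : M) {θ θ' η R : ℝ}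
    (h0 : 0 ≤ θ') (h1 : θ' ≤ 1) (hη : |θ - θ'| ≤ η) (hp : θ * dist a p ≤ 1 - θ)
    (hR : dist a p ≤ R) :
    ∃ p', θ' * dist a p' ≤ 1 - θ' ∧ dist p p' ≤ η * (R + 1) ^ 2 := by
  have hη0 : 0 ≤ η := (abs_nonneg _).trans hη
  by_cases h : θ' * dist a p ≤ 1 - θ'
  · exact ⟨p, h, by rw [dist_self]; positivity⟩
  push Not at h
  obtain ⟨γ, g0, g1, hg⟩ := hM a p
  have hd0 : 0 ≤ dist a p := dist_nonneg
  have hθ : 0 < θ' := by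
    rcases h0.lt_or_eq with h' | h'
    · exact h'
    · rw [← h'] at h; linarith
  have hd : 0 < dist a p := by
    rcases hd0.lt_or_eq with h' | h'
    · exact h'
    · rw [← h'] at h; linarith
  have hl0 : 0 ≤ (1 - θ') / (θ' * dist a p) := div_nonneg (by linarith) (by positivity)
  have hl1 : (1 - θ') / (θ' * dist a p) ≤ 1 := by
    rw [div_le_one (by positivity)]; exact h.le
  have e0 := hg 0 (by simp) _ ⟨hl0, hl1⟩
  have e1 := hg 1 (by simp) _ ⟨hl0, hl1⟩
  rw [g0, zero_sub, abs_neg, abs_of_nonneg hl0] at e0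
  rw [g1, abs_of_nonneg (by linarith)] at e1
  refine ⟨_, ?_, e1.le.trans ?_⟩
  · rw [e0]
    apply le_of_eq
    field_simp
  · have e2 : (1 - (1 - θ') / (θ' * dist a p)) * dist a p
        = (θ' * dist a p - (1 - θ')) / θ' := by field_simp
    rw [e2, div_le_iff₀ hθ]
    have hab := abs_le.1 hη
    have k1 : θ' * dist a p - (1 - θ') ≤ η * (R + 1) := by nlinarith
    have k2 : 1 ≤ (R + 1) * θ' := by nlinarith
    have k3 : 0 ≤ η * (R + 1) := by
      apply mul_nonneg hη0; linarith
    nlinarith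

theorem retract_V {V : Type*} [NormedAddCommGroup V] [NormedSpace ℝ V] (z : V) {r r' : ℝ}
    (hr' : 0 ≤ r') (hz : ‖z‖ ≤ r) : ∃ z', ‖z'‖ ≤ r' ∧ ‖z - z'‖ ≤ |r - r'| := by
  by_cases h : ‖z‖ ≤ r'
  · exact ⟨z, h, by simp⟩
  push Not at h
  have hz0 : 0 < ‖z‖ := hr'.trans_lt h
  refine ⟨(r' / ‖z‖) • z, ?_, ?_⟩
  · rw [norm_smul, Real.norm_of_nonneg (by positivity)]
    apply le_of_eq; field_simp
  · have : z - (r' / ‖z‖) • z = (1 - r' / ‖z‖) • z := by module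
    rw [this, norm_smul, Real.norm_of_nonneg (by rw [sub_nonneg, div_le_one hz0]; exact h.le)]
    have e : (1 - r' / ‖z‖) * ‖z‖ = ‖z‖ - r' := by field_simp
    rw [e]
    exact le_trans (by linarith) (le_abs_self _)

theorem ySet_retract {ι : Type} [Fintype ι] {X : ι → Type} [∀ i, MetricSpace (X i)] {D : ℕ → ℕ}
    (hcat : ∀ i, IsCAT0Space (X i)) (a : ∀ i, X i) {θ θ' : ι → ℝ} {r r' : ℕ → ℝ}
    (h0 : ∀ i, 0 ≤ θ' i) (h1 : ∀ i, θ' i ≤ 1) (hr0 : ∀ m, 0 ≤ r m) (hr : ∀ m, r m ≤ cc m)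
    (hr0' : ∀ m, 0 ≤ r' m)
    (hr' : ∀ m, r' m ≤ cc m) {η R : ℝ} (hη : ∀ i, |θ i - θ' i| ≤ η)
    (y : BigE X D) (hy : y ∈ YSet a θ r) (hyR : dist (mkE a 0) y ≤ R) :
    ∃ y' ∈ YSet a θ' r', dist y y' ^ 2 ≤
      ∑ _i : ι, (η * (R + 1) ^ 2) ^ 2 + ∑' m, (r m - r' m) ^ 2 := by
  choose p' hp1 hp2 using fun i => retract_X (hcat i).1 (a i) (y.fst i) (h0 i) (h1 i) (hη i)
    (hy.1 i) ((fst_dist_le (mkE a 0) y i).trans hyR)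
  choose z' hz1 hz2 using fun m => retract_V (y.snd m) (hr0' m) (hy.2 m)
  refine ⟨mkE p' (mkL z' fun m => (hz1 m).trans (hr' m)), ⟨hp1, hz1⟩, ?_⟩
  rw [bigE_dist_sq]
  simp only [mkE_fst, mkE_snd]
  refine add_le_add (Finset.sum_le_sum fun i _ => pow_le_pow_left₀ dist_nonneg (hp2 i) 2) ?_
  have hs := hilbL_hasSum y.snd (mkL z' fun m => (hz1 m).trans (hr' m))
  rw [← hs.tsum_eq]
  refine Summable.tsum_le_tsum (fun m => ?_) hs.summable ?_
  · rw [mkL_apply, ← sq_abs (r m - r' m)]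
    exact pow_le_pow_left₀ (norm_nonneg _) (hz2 m) 2
  · refine Summable.of_nonneg_of_le (fun m => sq_nonneg _) (fun m => ?_) cc_sq_summable
    rw [sq_le_sq, abs_of_pos (cc_pos m), abs_le]
    constructor <;> linarith [hr0 m, hr0' m, hr m, hr' m]

/-! ### Covering estimates -/

theorem exists_cover_bound {ι : Type} [Fintype ι] {X : ι → Type} [∀ i, MetricSpace (X i)]
    [∀ i, ProperSpace (X i)] (a : ∀ i, X i) (ε : ℝ) (hε : 0 < ε) (m : ℕ) (d : Fin m → ℕ) :
    ∃ N : ℕ, ∀ (p : Fin N → ∀ i, X i) (z : Fin N → ∀ j, EuclideanSpace ℝ (Fin (d j))),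
      (∀ k i, dist (p k i) (a i) ≤ 2) → (∀ k j, ‖z k j‖ ≤ 1) →
      ∃ k l, k ≠ l ∧ (∀ i, dist (p k i) (p l i) < ε) ∧ ∀ j, ‖z k j - z l j‖ < ε := by
  let W := (∀ i, X i) × (∀ j, EuclideanSpace ℝ (Fin (d j)))
  let o : W := (a, 0)
  have htb : TotallyBounded (Metric.closedBall o 2) := (isCompact_closedBall o 2).totallyBounded
  obtain ⟨t, ht, hcov⟩ := Metric.totallyBounded_iff.1 htb (ε / 2) (by positivity)
  refine ⟨ht.toFinset.card + 1, fun p z hp hz => ?_⟩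
  have hmem : ∀ k, ∃ y ∈ ht.toFinset, dist ((p k, z k) : W) y < ε / 2 := by
    intro k
    have hk : ((p k, z k) : W) ∈ Metric.closedBall o 2 := by
      rw [Metric.mem_closedBall, Prod.dist_eq, max_le_iff]
      refine ⟨(dist_pi_le_iff (by norm_num)).2 (hp k), (dist_pi_le_iff (by norm_num)).2 fun j => ?_⟩
      have := hz k j
      show dist (z k j) 0 ≤ 2
      rw [dist_zero_right]; linarith
    obtain ⟨y, hy, hy2⟩ := Set.mem_iUnion₂.1 (hcov hk)
    exact ⟨y, ht.mem_toFinset.2 hy, hy2⟩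
  choose y hy hyd using hmem
  obtain ⟨k, -, l, -, hkl, he⟩ := Finset.exists_ne_map_eq_of_card_lt_of_maps_to
    (s := Finset.univ) (t := ht.toFinset) (f := y) (by simp) (fun k _ => hy k)
  have hd : dist ((p k, z k) : W) (p l, z l) < ε := by
    have h1 := hyd k
    have h2 := hyd l
    rw [he] at h1
    have := dist_triangle_right ((p k, z k) : W) (p l, z l) (y l)
    linarith
  rw [Prod.dist_eq, max_lt_iff] at hd
  refine ⟨k, l, hkl, fun i => (dist_le_pi_dist _ _ i).trans_lt hd.1, fun j => ?_⟩
  rw [← dist_eq_norm]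
  exact (dist_le_pi_dist (z k) (z l) j).trans_lt hd.2

/-- Recursively defined dimensions. -/
def Dseq (G : ∀ m : ℕ, (Fin m → ℕ) → ℕ) : ℕ → ℕ
  | m => G m (fun j : Fin m => Dseq G j)
decreasing_by exact j.2

theorem exists_dims {ι : Type} [Fintype ι] {X : ι → Type} [∀ i, MetricSpace (X i)]
    [∀ i, ProperSpace (X i)] (a : ∀ i, X i) :
    ∃ D : ℕ → ℕ, ∀ (m : ℕ) (p : Fin (D m) → ∀ i, X i) (z : Fin (D m) → ∀ j : Fin m, EB D j),
      (∀ k i, dist (p k i) (a i) ≤ 2) → (∀ k j, ‖z k j‖ ≤ 1) →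
      ∃ k l, k ≠ l ∧ (∀ i, dist (p k i) (p l i) < cc m / (2 * (Fintype.card ι + m + 1))) ∧
        ∀ j, ‖z k j - z l j‖ < cc m / (2 * (Fintype.card ι + m + 1)) := by
  choose G hG using fun m => exists_cover_bound a (cc m / (2 * (Fintype.card ι + m + 1)))
    (by have := cc_pos m; positivity) m
  refine ⟨Dseq G, fun m => ?_⟩
  have e : Dseq G m = G m (fun j : Fin m => Dseq G j) := by rw [Dseq]
  have := hG m (fun j : Fin m => Dseq G j)
  rw [← e] at this
  exact this

/-- The conclusion of `exists_dims`. -/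
def GoodDims {ι : Type} [Fintype ι] {X : ι → Type} [∀ i, MetricSpace (X i)]
    (a : ∀ i, X i) (D : ℕ → ℕ) : Prop :=
  ∀ (m : ℕ) (p : Fin (D m) → ∀ i, X i) (z : Fin (D m) → ∀ j : Fin m, EB D j),
      (∀ k i, dist (p k i) (a i) ≤ 2) → (∀ k j, ‖z k j‖ ≤ 1) →
      ∃ k l, k ≠ l ∧ (∀ i, dist (p k i) (p l i) < cc m / (2 * (Fintype.card ι + m + 1))) ∧
        ∀ j, ‖z k j - z l j‖ < cc m / (2 * (Fintype.card ι + m + 1))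

theorem cc_tail_hasSum (m : ℕ) :
    HasSum (fun j => 4 * cc (j + (m + 1)) ^ 2) (4 / 15 * cc m ^ 2) := by
  have hh := (hasSum_geometric_of_lt_one (r := (1 / 16 : ℝ)) (by norm_num)
    (by norm_num)).mul_left (4 * (1 / 16) ^ (m + 1))
  have ef : (fun j => 4 * cc (j + (m + 1)) ^ 2) =
      fun j => 4 * (1 / 16 : ℝ) ^ (m + 1) * (1 / 16) ^ j := by
    funext j
    rw [cc_sq, pow_add]; ring
  have ev : 4 / 15 * (1 / 16 : ℝ) ^ m = 4 * (1 / 16) ^ (m + 1) * (1 - 1 / 16)⁻¹ := by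
    rw [pow_succ]; ring
  rw [ef, cc_sq, ev]
  exact hh

theorem scalar_tail (f : ℕ → ℝ) (S ε : ℝ) (m : ℕ) (hs : HasSum (fun j => f j ^ 2) S)
    (h0 : ∀ j, 0 ≤ f j) (hm : f m = 0) (hlt : ∀ j < m, f j ≤ ε) (hcc : ∀ j, f j ≤ 2 * cc j) :
    S ≤ m * ε ^ 2 + 4 / 15 * cc m ^ 2 := by
  rw [← hs.tsum_eq, ← hs.summable.sum_add_tsum_nat_add (m + 1), Finset.sum_range_succ, hm]
  have e1 : ∑ j ∈ Finset.range m, f j ^ 2 ≤ m * ε ^ 2 := by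
    have : ∑ j ∈ Finset.range m, f j ^ 2 ≤ ∑ j ∈ Finset.range m, ε ^ 2 :=
      Finset.sum_le_sum fun j hj => pow_le_pow_left₀ (h0 j) (hlt j (Finset.mem_range.1 hj)) 2
    simpa using this
  have hg := cc_tail_hasSum m
  have e2 : ∑' j, f (j + (m + 1)) ^ 2 ≤ 4 / 15 * cc m ^ 2 := by
    rw [← hg.tsum_eq]
    refine Summable.tsum_le_tsum (fun j => ?_)
      ((summable_nat_add_iff (m + 1)).2 hs.summable) hg.summable
    have := pow_le_pow_left₀ (h0 (j + (m + 1))) (hcc (j + (m + 1))) 2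
    linarith [mul_pow 2 (cc (j + (m + 1))) 2]
  linarith

theorem scalar_final (N m c ε x : ℝ) (hN : 0 ≤ N) (hm : 0 ≤ m) (hc : 0 < c)
    (hε : ε = c / (2 * (N + m + 1)))
    (h : x ^ 2 ≤ N * ε ^ 2 + (m * ε ^ 2 + 4 / 15 * c ^ 2)) : x < c := by
  have e3 : (N + m) * ε ^ 2 ≤ c ^ 2 / 4 := by
    have hq : 0 < N + m + 1 := by linarith
    have : ε ^ 2 * (4 * (N + m + 1) ^ 2) = c ^ 2 := by rw [hε]; field_simp; norm_num
    have hle : N + m ≤ (N + m + 1) ^ 2 := by nlinarith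
    nlinarith [mul_le_mul_of_nonneg_right hle (sq_nonneg ε)]
  have e4 : x ^ 2 < c ^ 2 := by nlinarith [sq_pos_of_pos hc]
  exact lt_of_pow_lt_pow_left₀ 2 hc.le e4

theorem exists_close_pair {ι : Type} [Fintype ι] {X : ι → Type} [∀ i, MetricSpace (X i)]
    {a : ∀ i, X i} {D : ℕ → ℕ} (hD : GoodDims a D) (m : ℕ) (y : Fin (D m) → BigE X D)
    (h1 : ∀ k, dist (y k) (mkE a 0) ≤ 2) (h2 : ∀ k j, ‖(y k).snd j‖ ≤ cc j)
    (h3 : ∀ k, (y k).snd m = 0) : ∃ k l, k ≠ l ∧ dist (y k) (y l) < cc m := by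
  obtain ⟨k, l, hkl, hp, hz⟩ := hD m (fun k i => (y k).fst i) (fun k j => (y k).snd j)
    (fun k i => (fst_dist_le (y k) (mkE a 0) i).trans (h1 k))
    (fun k j => (h2 k j).trans (cc_le_one _))
  refine ⟨k, l, hkl, ?_⟩
  refine scalar_final (Fintype.card ι) m (cc m) _ _ (Nat.cast_nonneg _) (Nat.cast_nonneg _)
    (cc_pos m) rfl ?_
  rw [bigE_dist_sq]
  refine add_le_add ?_ ?_
  · have : ∑ i, dist ((y k).fst i) ((y l).fst i) ^ 2 ≤
        ∑ _i : ι, (cc m / (2 * (Fintype.card ι + m + 1))) ^ 2 :=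
      Finset.sum_le_sum fun i _ => pow_le_pow_left₀ dist_nonneg (hp i).le 2
    rwa [Finset.sum_const, Finset.card_univ, nsmul_eq_mul] at this
  · refine scalar_tail (fun j => ‖(y k).snd j - (y l).snd j‖) _ _ m
      (hilbL_hasSum (y k).snd (y l).snd) (fun j => norm_nonneg _) ?_ ?_ ?_
    · show ‖(y k).snd m - (y l).snd m‖ = 0
      rw [h3, h3, sub_zero, norm_zero]
    · exact fun j hj => (hz ⟨j, hj⟩).le
    · intro j
      have h4 := norm_sub_le ((y k).snd j) ((y l).snd j)
      have h5 := h2 k j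
      have h6 := h2 l j
      show ‖(y k).snd j - (y l).snd j‖ ≤ _
      linarith

theorem separation {ι : Type} [Fintype ι] {X : ι → Type} [∀ i, MetricSpace (X i)]
    {a : ∀ i, X i} {D : ℕ → ℕ} (hD : GoodDims a D) (m : ℕ) {θ θ' : ι → ℝ} {r r' : ℕ → ℝ}
    (hr : ∀ m, r m ≤ cc m) (hrm : r m = 0)
    (hθ' : ∀ i, θ' i ≤ 1) (hr' : ∀ m, 0 ≤ r' m) (hrm' : r' m = cc m)
    (o : YSet (D := D) a θ r) (ho : o.1 = mkE a 0)
    (o' : YSet (D := D) a θ' r') (ho' : o'.1 = mkE a 0) :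
    cc m / 5 ≤ pghDistOf (YSet (D := D) a θ' r') (YSet (D := D) a θ r) o' o := by
  by_contra! hcon
  have hc := cc_pos m
  have hc1 := cc_le_one m
  obtain ⟨s, hs, c, hC⟩ := exists_crossGood hcon (by linarith)
  have hs0 := hC.pos
  let e : Fin (D m) → EB D m := fun k => EuclideanSpace.single k (cc m)
  have he : ∀ k, ‖e k‖ = cc m := fun k => by simp [e, abs_of_pos hc]
  have hee : ∀ k l, k ≠ l → ‖e k - e l‖ ^ 2 = 2 * cc m ^ 2 := by
    intro k l hkl
    have : inner ℝ (e k) (e l) = 0 := by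
      simp [e, EuclideanSpace.inner_single_left, hkl]
    rw [@norm_sub_sq_real, this, he, he]; ring
  let y : Fin (D m) → BigE X D := fun k => mkE a (lp.single 2 m (e k))
  have hy : ∀ k, y k ∈ YSet a θ' r' := by
    intro k
    refine ⟨fun i => ?_, fun j => ?_⟩
    · show θ' i * dist (a i) (a i) ≤ _
      rw [dist_self]; linarith [hθ' i]
    · show ‖lp.single 2 m (e k) j‖ ≤ r' j
      by_cases hj : j = m
      · subst hj
        rw [lp.single_apply_self, he, hrm']
      · rw [lp.single_apply_ne _ _ _ hj, norm_zero]; exact hr' j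
  have hyd : ∀ k l, dist (y k) (y l) = ‖e k - e l‖ := by
    intro k l
    rw [← sq_eq_sq₀ dist_nonneg (norm_nonneg _), bigE_dist_sq]
    simp only [y, mkE_fst, mkE_snd, dist_self]
    rw [dist_eq_norm, ← lp.single_sub, lp.norm_single (by norm_num)]
    simp
  have hyo : ∀ k, dist (mkE a 0) (y k) = cc m := by
    intro k
    rw [← sq_eq_sq₀ dist_nonneg hc.le, bigE_dist_sq]
    simp only [y, mkE_fst, mkE_snd, dist_self]
    rw [dist_zero_left, lp.norm_single (by norm_num), he]
    simp
  have hinv : 1 ≤ s⁻¹ := by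
    rw [one_le_inv₀ hs0]; linarith
  have hyo' : ∀ k, dist o' (⟨y k, hy k⟩ : YSet (D := D) a θ' r') = cc m := by
    intro k
    rw [Subtype.dist_eq, ho', hyo]
  choose w hw using fun k => hC.left ⟨y k, hy k⟩ (by rw [hyo']; linarith)
  obtain ⟨k, l, hkl, hlt⟩ := exists_close_pair hD m (fun k => (w k).1) (fun k => by
      have t1 := hC.tri4 ⟨y k, hy k⟩ (w k) o
      have t2 := hC.tri1 ⟨y k, hy k⟩ o' o
      rw [dist_comm, hyo'] at t2
      have t3 : dist (w k).1 (mkE a 0) = dist (w k) o := by rw [Subtype.dist_eq, ho]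
      have t4 := hC.base
      have t5 := hw k
      rw [t3]; linarith) (fun k j => ((w k).2.2 j).trans (hr j)) (fun k => by
      have := (w k).2.2 m
      rw [hrm] at this
      exact norm_le_zero_iff.1 this)
  have t1 := hC.tri3 ⟨y k, hy k⟩ ⟨y l, hy l⟩ (w k)
  have t2 := hC.tri2 ⟨y l, hy l⟩ (w k) (w l)
  have t3 := hw k
  have t4 := hw l
  have t5 : dist (w l) (w k) < cc m := by rw [dist_comm]; exact hlt
  have t6 : dist (⟨y k, hy k⟩ : YSet (D := D) a θ' r') ⟨y l, hy l⟩ = ‖e k - e l‖ := hyd k l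
  have t7 := hee k l hkl
  have t8 : 7 / 5 * cc m ≤ ‖e k - e l‖ := by
    apply le_of_sq_le_aux _ (norm_nonneg _)
    rw [t7]; nlinarith
  linarith

/-! ### Functions on the parameter space -/

theorem exists_phi {H : Type*} [MetricSpace H] [CompactSpace H] (V : Set H) (hV : IsClosed V)
    (hne : V.Nonempty) :
    ∃ φ : ℕ → H → ℝ, (∀ m, Continuous (φ m)) ∧ (∀ m x, 0 ≤ φ m x) ∧ (∀ m x, φ m x ≤ 1) ∧
      (∀ m, ∀ x ∈ V, φ m x = 0) ∧
      ∀ h h', h ≠ h' → h' ∉ V → ∃ m, φ m h = 0 ∧ φ m h' = 1 := by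
  have : Nonempty H := hne.nonempty
  let q := TopologicalSpace.denseSeq H
  refine ⟨fun m x => max 0 (min 1 (min (2 - (m.unpair.2 : ℝ) * dist x (q m.unpair.1))
    (m.unpair.2 * Metric.infDist x V))), ?_, ?_, ?_, ?_, ?_⟩
  · intro m
    have := Metric.continuous_infDist_pt V
    fun_prop
  · intro m x; exact le_max_left _ _
  · intro m x; exact max_le zero_le_one (min_le_left _ _)
  · intro m x hx
    apply max_eq_left
    refine (min_le_right _ _).trans ((min_le_right _ _).trans ?_)
    rw [Metric.infDist_zero_of_mem hx, mul_zero]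
  · intro h h' hne' hV'
    have hpos : 0 < Metric.infDist h' V := (hV.notMem_iff_infDist_pos hne).1 hV'
    have hd : 0 < dist h h' := dist_pos.2 hne'
    obtain ⟨s, hs⟩ := exists_nat_gt (max (1 / Metric.infDist h' V) (3 / dist h h'))
    have hs1 := (le_max_left _ _).trans_lt hs
    have hs2 := (le_max_right _ _).trans_lt hs
    rw [div_lt_iff₀ hpos] at hs1
    rw [div_lt_iff₀ hd] at hs2
    have hs0 : (0 : ℝ) < s := by
      by_contra! hcon
      nlinarith
    obtain ⟨k, hk⟩ := (TopologicalSpace.denseRange_denseSeq H).exists_dist_lt h'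
      (ε := 1 / s) (by positivity)
    have hk' : s * dist h' (q k) < 1 := by
      have := (lt_div_iff₀ hs0).1 hk
      rw [mul_comm]; exact this
    refine ⟨Nat.pair k s, ?_, ?_⟩
    · simp only [Nat.unpair_pair]
      apply max_eq_left
      refine (min_le_right _ _).trans ((min_le_left _ _).trans ?_)
      have := dist_triangle_right h h' (q k)
      nlinarith [mul_le_mul_of_nonneg_left this hs0.le]
    · simp only [Nat.unpair_pair]
      rw [min_eq_left, max_eq_right zero_le_one]
      exact le_min (by linarith) (by linarith)

theorem exists_theta {H : Type*} [MetricSpace H] {ι : Type} [Fintype ι] (v : ι → H)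
    (hv : Function.Injective v) :
    ∃ θ : ι → H → ℝ, (∀ i, Continuous (θ i)) ∧ (∀ i x, 0 ≤ θ i x) ∧ (∀ i x, θ i x ≤ 1) ∧
      (∀ i, θ i (v i) = 0) ∧ ∀ i j, i ≠ j → θ i (v j) = 1 := by
  let K : ℝ := ∑ i, ∑ j, (dist (v j) (v i))⁻¹
  have hK0 : 0 ≤ K := Finset.sum_nonneg fun i _ => Finset.sum_nonneg fun j _ =>
    inv_nonneg.2 dist_nonneg
  refine ⟨fun i x => min 1 (K * dist x (v i)), ?_, ?_, ?_, ?_, ?_⟩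
  · intro i; fun_prop
  · intro i x; exact le_min zero_le_one (by positivity)
  · intro i x; exact min_le_left _ _
  · intro i; simp
  · intro i j hij
    have hd : 0 < dist (v j) (v i) := dist_pos.2 fun h => hij (hv h).symm
    have hK : (dist (v j) (v i))⁻¹ ≤ K := by
      refine le_trans ?_ (Finset.single_le_sum (f := fun i => ∑ j, (dist (v j) (v i))⁻¹)
        (fun i _ => Finset.sum_nonneg fun j _ => inv_nonneg.2 dist_nonneg) (Finset.mem_univ i))
      exact Finset.single_le_sum (f := fun j => (dist (v j) (v i))⁻¹)
        (fun j _ => inv_nonneg.2 dist_nonneg) (Finset.mem_univ j)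
    apply min_eq_left
    have := mul_le_mul_of_nonneg_right hK hd.le
    rwa [inv_mul_cancel₀ hd.ne'] at this

theorem vertex_equiv {ι : Type} [Fintype ι] {X : ι → Type} [∀ i, MetricSpace (X i)]
    {D : ℕ → ℕ} (a : ∀ i, X i) (θ : ι → ℝ) (r : ℕ → ℝ) (i : ι) (hi : θ i = 0)
    (hj : ∀ j, j ≠ i → θ j = 1) (hr : ∀ m, r m = 0)
    (o : YSet (D := D) a θ r) (ho : o.1 = mkE a 0) :
    ∃ e : YSet (D := D) a θ r ≃ᵢ X i, e o = a i := by
  classical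
  have hfst : ∀ y ∈ YSet (D := D) a θ r, ∀ j, j ≠ i → y.fst j = a j := by
    intro y hy j hji
    have := hy.1 j
    rw [hj j hji, one_mul, sub_self] at this
    exact (dist_le_zero.1 this).symm
  have hsnd : ∀ y ∈ YSet (D := D) a θ r, y.snd = 0 := by
    intro y hy
    ext1
    funext m
    have := hy.2 m
    rw [hr m] at this
    exact norm_le_zero_iff.1 this
  have hiso : Isometry fun y : YSet (D := D) a θ r => y.1.fst i := by
    refine Isometry.of_dist_eq fun x y => ?_
    rw [← sq_eq_sq₀ dist_nonneg dist_nonneg, Subtype.dist_eq, bigE_dist_sq, hsnd x x.2, hsnd y y.2,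
      Finset.sum_eq_single i]
    · simp
    · intro j _ hji
      rw [hfst x x.2 j hji, hfst y y.2 j hji, dist_self]; simp
    · simp
  have hsurj : Function.Surjective fun y : YSet (D := D) a θ r => y.1.fst i := by
    intro x
    refine ⟨⟨mkE (Function.update a i x) 0, ?_, ?_⟩, ?_⟩
    · intro j
      rw [mkE_fst]
      by_cases hji : j = i
      · subst hji; rw [hi]; simp
      · rw [Function.update_of_ne hji, dist_self, hj j hji]; simp
    · intro m
      rw [mkE_snd, hr m]; simp
    · show (mkE (D := D) (Function.update a i x) 0).fst i = x
      rw [mkE_fst, Function.update_self]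
  refine ⟨⟨Equiv.ofBijective _ ⟨hiso.injective, hsurj⟩, hiso⟩, ?_⟩
  show o.1.fst i = a i
  rw [ho, mkE_fst]

theorem family_continuous {H : Type*} [TopologicalSpace H] {ι : Type} [Fintype ι] {X : ι → Type}
    [∀ i, MetricSpace (X i)] {D : ℕ → ℕ}
    (hcat : ∀ i, IsCAT0Space (X i)) (a : ∀ i, X i) (θ : ι → H → ℝ) (φ : ℕ → H → ℝ)
    (hθc : ∀ i, Continuous (θ i)) (hθ0 : ∀ i x, 0 ≤ θ i x) (hθ1 : ∀ i x, θ i x ≤ 1)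
    (hφc : ∀ m, Continuous (φ m)) (hφ0 : ∀ m x, 0 ≤ φ m x) (hφ1 : ∀ m x, φ m x ≤ 1)
    (o : ∀ h, YSet (D := D) a (fun i => θ i h) (fun m => φ m h * cc m))
    (ho : ∀ h, (o h).1 = mkE a 0) (h₀ : H) (ε : ℝ) (hε : 0 < ε) :
    ∀ᶠ h in nhds h₀, pghDistOf (YSet (D := D) a (fun i => θ i h₀) (fun m => φ m h₀ * cc m))
      (YSet (D := D) a (fun i => θ i h) (fun m => φ m h * cc m)) (o h₀) (o h) < ε := by
  have hr0 : ∀ h m, 0 ≤ φ m h * cc m := fun h m => mul_nonneg (hφ0 m h) (cc_pos m).le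
  have hr1 : ∀ h m, φ m h * cc m ≤ cc m := fun h m =>
    mul_le_of_le_one_left (cc_pos m).le (hφ1 m h)
  set t := ε / 2 with ht
  have ht0 : 0 < t := by positivity
  let η : H → ℝ := fun h => ∑ i, |θ i h₀ - θ i h|
  let F : H → ℝ := fun h => ∑ _i : ι, (η h * (t⁻¹ + 1) ^ 2) ^ 2 +
    ∑' m, (φ m h₀ * cc m - φ m h * cc m) ^ 2
  have hη : Continuous η := by
    refine continuous_finsetSum _ fun i _ => ?_
    have := hθc i
    fun_prop
  have hF : Continuous F := by
    refine Continuous.add (by fun_prop) ?_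
    refine continuous_tsum (fun m => ?_) cc_sq_summable (fun m h => ?_)
    · have := hφc m
      fun_prop
    · rw [Real.norm_of_nonneg (sq_nonneg _), sq_le_sq, abs_of_pos (cc_pos m), abs_le]
      constructor <;> linarith [hr0 h m, hr0 h₀ m, hr1 h m, hr1 h₀ m]
  have hF0 : F h₀ = 0 := by simp [F, η]
  have hev : ∀ᶠ h in nhds h₀, F h < t ^ 2 :=
    (hF.tendsto h₀).eventually (gt_mem_nhds (by rw [hF0]; positivity))
  filter_upwards [hev] with h hh
  have hηle : ∀ i, |θ i h₀ - θ i h| ≤ η h := fun i =>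
    Finset.single_le_sum (f := fun i => |θ i h₀ - θ i h|) (fun i _ => abs_nonneg _)
      (Finset.mem_univ i)
  refine lt_of_le_of_lt ?_ (show t < ε by rw [ht]; linarith)
  refine pghDistOf_le_of_isometry (M := BigE X D) isometry_subtype_coe isometry_subtype_coe
    (by rw [ho, ho]) ht0 ?_ ?_
  · intro x hx
    obtain ⟨y, hy, hxy⟩ := ySet_retract hcat a (fun i => hθ0 i h) (fun i => hθ1 i h) (hr0 h₀)
      (hr1 h₀) (hr0 h) (hr1 h) hηle x.1 x.2 (R := t⁻¹) (by rw [← ho h₀]; exact hx)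
    exact ⟨⟨y, hy⟩, lt_of_pow_lt_pow_left₀ 2 ht0.le (hxy.trans_lt hh)⟩
  · intro x hx
    obtain ⟨y, hy, hxy⟩ := ySet_retract hcat a (fun i => hθ0 i h₀) (fun i => hθ1 i h₀) (hr0 h)
      (hr1 h) (hr0 h₀) (hr1 h₀) (fun i => by rw [abs_sub_comm]; exact hηle i) x.1 x.2 (R := t⁻¹)
      (by rw [← ho h]; exact hx)
    refine ⟨⟨y, hy⟩, lt_of_pow_lt_pow_left₀ 2 ht0.le ?_⟩
    rw [dist_comm]
    refine hxy.trans_lt (lt_of_le_of_lt (le_of_eq ?_) hh)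
    simp only [F]
    congr 1
    exact tsum_congr fun m => by ring


/-- Let `H` be a compact metrizable space, `n ≥ 1`, and
`v 0, …, v n` be `n+1` distinct points of `H`.  Let
`(X 0, a 0), …, (X n, a n)` be pointed proper CAT(0) metric spaces with
positive pairwise pointed Gromov–Hausdorff distances.  Then there is a
topological embedding `Φ` of `H` into `𝒫𝒵 ⊆ 𝒫ℳ` (i.e. an embedding into
`𝒫ℳ` whose range consists of pointed proper CAT(0) spaces) such that
`Φ (v i)` is the pointed isometry class of `(X i, a i)`. -/
theorem statement9 {H : Type*} [TopologicalSpace H] [CompactSpace H]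
    [TopologicalSpace.MetrizableSpace H]
    (n : ℕ) (hn : 1 ≤ n) (v : Fin (n + 1) → H) (hv : Function.Injective v)
    (X : Fin (n + 1) → Type) [∀ i, MetricSpace (X i)] [∀ i, ProperSpace (X i)]
    (a : ∀ i, X i)
    (hcat : ∀ i, IsCAT0Space (X i))
    (hdist : ∀ i j, i ≠ j → 0 < pghDistOf (X i) (X j) (a i) (a j)) :
    ∃ Φ : H → PGHSpace,
      Topology.IsEmbedding Φ ∧
      (∀ h : H, Φ h ∈ PGHCat0) ∧
      ∀ i, Φ (v i) = PGHSpace.mk (X i) (a i) := by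
  letI : MetricSpace H := TopologicalSpace.metrizableSpaceMetric H
  obtain ⟨D, hD⟩ := exists_dims a
  obtain ⟨θ, hθc, hθ0, hθ1, hθv, hθv'⟩ := exists_theta v hv
  obtain ⟨φ, hφc, hφ0, hφ1, hφV, hφs⟩ := exists_phi (Set.range v) (Set.finite_range v).isClosed
    (Set.range_nonempty v)
  have hr0 : ∀ h m, 0 ≤ φ m h * cc m := fun h m => mul_nonneg (hφ0 m h) (cc_pos m).le
  have hr1 : ∀ h m, φ m h * cc m ≤ cc m := fun h m =>
    mul_le_of_le_one_left (cc_pos m).le (hφ1 m h)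
  let o : ∀ h, YSet (D := D) a (fun i => θ i h) (fun m => φ m h * cc m) := fun h =>
    ⟨mkE a 0, base_mem a _ _ (fun i => hθ1 i h) (hr0 h)⟩
  let Y : H → PointedProperMetricSpace := fun h =>
    { carrier := YSet (D := D) a (fun i => θ i h) (fun m => φ m h * cc m)
      prop := ySet_proper a _ _ (hr1 h)
      pt := o h }
  have hvert : ∀ i, ∃ e : (Y (v i)).carrier ≃ᵢ X i, e (Y (v i)).pt = a i := by
    intro i
    exact vertex_equiv a _ _ i (hθv i) (fun j hj => hθv' j i hj)
      (fun m => by rw [hφV m (v i) (Set.mem_range_self i), zero_mul]) (o (v i)) rfl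
  have hsep : ∀ h h', h ≠ h' → h' ∉ Set.range v → 0 < pghDist (Y h') (Y h) := by
    intro h h' hne hV
    obtain ⟨m, hm0, hm1⟩ := hφs h h' hne hV
    have := separation hD m (hr1 h) (by rw [hm0, zero_mul]) (fun i => hθ1 i h') (hr0 h')
      (by rw [hm1, one_mul]) (o h) rfl (o h') rfl
    have hc := cc_pos m
    exact lt_of_lt_of_le (by positivity) this
  refine ⟨fun h => Quotient.mk pointedIsometrySetoid (Y h), ?_, ?_, ?_⟩
  · refine isEmbedding_of_family Y ?_ ?_
    · intro h₀ ε hε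
      exact family_continuous hcat a θ φ hθc hθ0 hθ1 hφc hφ0 hφ1 o (fun h => rfl) h₀ ε hε
    · intro h h' hne
      by_cases h1 : h' ∈ Set.range v
      · by_cases h2 : h ∈ Set.range v
        · obtain ⟨j, rfl⟩ := h1
          obtain ⟨i, rfl⟩ := h2
          have hij : i ≠ j := fun e => hne (by rw [e])
          let Xp : Fin (n + 1) → PointedProperMetricSpace := fun i => ⟨X i, a i⟩
          have hd : 0 < pghDist (Xp i) (Xp j) := hdist i j hij
          have z1 : pghDist (Y (v i)) (Xp i) = 0 := pghDist_eq_zero_of_equiv (hvert i)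
          have z2 : pghDist (Y (v j)) (Xp j) = 0 := pghDist_eq_zero_of_equiv (hvert j)
          have t1 := pghDist_triangle (Xp i) (Y (v i)) (Xp j)
          have t2 := pghDist_triangle (Y (v i)) (Y (v j)) (Xp j)
          rw [pghDist_comm (Xp i) (Y (v i))] at t1
          linarith
        · exact hsep h' h hne.symm h2
      · rw [pghDist_comm]
        exact hsep h h' hne h1
  · intro h
    obtain ⟨e, -⟩ := Quotient.mk_out (s := pointedIsometrySetoid) (Y h)
    refine IsCAT0Space.of_isometryEquiv e.symm ?_
    exact (ySet_cvxCat hcat a _ (fun i => hθ0 i h) _).isCAT0Space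
  · intro i
    exact Quotient.sound (s := pointedIsometrySetoid) (hvert i)
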